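/- arXiv:2210.15730 — 2 statements merged into one kernel-verified Lean document; each statement's English description precedes it below -/
import Mathlib

section
/- For every integer r ≥ 1, every real λ > −1/2 and every θ ∈ ℝ, writing t = cos θ, one has Σ_{s=0}^{r} (−1)^s · binom(r,s) · ((λ+r)_s/(λ+1/2)_s) · (1−t²)^s = Σ_{s=0}^{r} d_s^r(λ) · cos((2r−2s)θ), where d_s^r(λ) = 2 · (2r+1−s)_s · (λ)_s · (λ+r)_{r−s} / (4^r · (λ+1/2)_r · s!) for s = 0,1,…,r−1, and d_r^r(λ) = (r+1)_r · (λ)_r / (4^r · (λ+1/2)_r · r!). (This decomposes the normalized Gegenbauer polynomial P_{2r}^{(λ−1/2)} in terms of Chebyshev polynomials of the first kind.) -/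
open Real Finset

/-- Pochhammer symbol (z)_n = z(z+1)...(z+n-1), with (z)_0 = 1. -/
noncomputable def poch (z : ℝ) (n : ℕ) : ℝ := ∏ i ∈ Finset.range n, (z + i)

/-- Coefficient d_s^r(lambda). -/
noncomputable def dcoef (r s : ℕ) (l : ℝ) : ℝ :=
  if s < r then
    2 * poch (2 * r + 1 - s) s * poch l s * poch (l + r) (r - s) /
      (4 ^ r * poch (l + 1 / 2) r * Nat.factorial s)
  else
    poch (r + 1) r * poch l r / (4 ^ r * poch (l + 1 / 2) r * Nat.factorial r)

/-
Write `sin² θ = 1 - X²` in the variable `X = cos θ`. The second central difference acts on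
`k ↦ T (2k)` as multiplication by `-4 (1 - X²)`, so `(4 (1 - X²)) ^ s` is, up to sign, a central
difference of order `2s` of the even Chebyshev polynomials. Substituting this into the Gegenbauer
sum, the coefficient of `T (2j)` is a terminating balanced `₃F₂` at `1`, which the Pfaff–Saalschütz
theorem evaluates.
-/

open Polynomial fwdDiff
open Polynomial.Chebyshev (T T_zero T_two T_neg T_mul_T T_real_cos)

section Pochhammer

theorem ascPochhammer_eval_add {S : Type*} [CommSemiring S] (m n : ℕ) (z : S) :
    (ascPochhammer S (m + n)).eval z =
      (ascPochhammer S m).eval z * (ascPochhammer S n).eval (z + m) := by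
  simp [← ascPochhammer_mul]

theorem ascPochhammer_succ_eval_left {S : Type*} [CommSemiring S] (n : ℕ) (z : S) :
    (ascPochhammer S (n + 1)).eval z = z * (ascPochhammer S n).eval (z + 1) := by
  simp [ascPochhammer_succ_left]

theorem ascPochhammer_eval_natCast_add_one (S : Type*) [Semiring S] (m n : ℕ) :
    (ascPochhammer S n).eval (m + 1 : S) = n.factorial * (m + n).choose n := by
  rw [← Nat.cast_add_one, ← Nat.cast_ascFactorial, Nat.ascFactorial_eq_factorial_mul_choose,
    Nat.cast_mul]

theorem ascPochhammer_eval_natCast_add_one_ne_zero (S : Type*) [Semiring S] [CharZero S]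
    (m n : ℕ) : (ascPochhammer S n).eval (m + 1 : S) ≠ 0 := by
  rw [← Nat.cast_add_one, ← Nat.cast_ascFactorial, Nat.cast_ne_zero]
  exact (Nat.ascFactorial_pos m n).ne'

theorem ascPochhammer_eval_two_mul {K : Type*} [Field K] [NeZero (2 : K)] (n : ℕ) (z : K) :
    (ascPochhammer K (2 * n)).eval (2 * z) =
      4 ^ n * (ascPochhammer K n).eval z * (ascPochhammer K n).eval (z + 1 / 2) := by
  have half : (2 : K) * (1 / 2) = 1 := mul_one_div_cancel two_ne_zero
  induction n with
  | zero => simp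
  | succ n ih =>
    simp only [Nat.mul_succ, ascPochhammer_succ_eval, ih, pow_succ]
    push_cast
    linear_combination (-2 * (z + n) * 4 ^ n * (ascPochhammer K n).eval z *
      (ascPochhammer K n).eval (z + 1 / 2)) * half

end Pochhammer

section Saalschutz

variable {R : Type*} [CommRing R]

/-- The `k`-th term of the terminating hypergeometric series `₃F₂(-n, a + n, b; c, d; 1)`,
multiplied by `(c)_n (d)_n` so that it makes sense in every commutative ring. -/
noncomputable def saalschutzTerm (n : ℕ) (a b c d : R) (k : ℕ) : R :=
  (-1) ^ k * n.choose k * (ascPochhammer R k).eval (a + n) * (ascPochhammer R k).eval b *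
    ((ascPochhammer R (n - k)).eval (c + k) * (ascPochhammer R (n - k)).eval (d + k))

theorem add_one_choose_mul_sub_choose_mul (n k : ℕ) (a : R) :
    (n + 1).choose (k + 1) * (a + n + 1 + k) - n.choose (k + 1) * (a + n) =
      (a + 2 * n + 1) * n.choose k := by
  have pascal : ((n + 1).choose (k + 1) : R) = n.choose k + n.choose (k + 1) := by
    rw [Nat.choose_succ_succ', Nat.cast_add]
  have absorb : ((n : R) + 1) * n.choose k = (n + 1).choose (k + 1) * (k + 1) := by
    simpa using congrArg (Nat.cast (R := R)) (Nat.add_one_mul_choose_eq n k)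
  rw [pascal] at absorb ⊢
  linear_combination -absorb

theorem mul_saalschutzTerm_zero (n : ℕ) (a b c d : R) :
    (c + n) * (d + n) * saalschutzTerm n a b c d 0 = saalschutzTerm (n + 1) a b c d 0 := by
  simp only [saalschutzTerm, Nat.sub_zero, ascPochhammer_succ_eval, pow_zero, Nat.choose_zero_right,
    Nat.cast_zero, Nat.cast_one, ascPochhammer_zero, eval_one, add_zero]
  ring

theorem mul_saalschutzTerm_succ {n k : ℕ} (hk : k ≤ n) (a b c d : R) :
    (c + n) * (d + n) * saalschutzTerm n a b c d (k + 1) =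
      (-1) ^ (k + 1) * n.choose (k + 1) * (ascPochhammer R (k + 1)).eval (a + n) *
        (ascPochhammer R (k + 1)).eval b *
        ((ascPochhammer R (n - k)).eval (c + 1 + k) *
          (ascPochhammer R (n - k)).eval (d + 1 + k)) := by
  obtain rfl | hlt := hk.eq_or_lt
  · simp [saalschutzTerm]
  · obtain ⟨m, rfl⟩ := Nat.exists_eq_add_of_lt hlt
    rw [saalschutzTerm, show k + m + 1 - (k + 1) = m by omega, show k + m + 1 - k = m + 1 by omega]
    simp only [ascPochhammer_succ_eval m]
    push_cast
    ring_nf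

theorem saalschutzTerm_succ {n k : ℕ} (hk : k ≤ n) (a b c d : R) :
    saalschutzTerm (n + 1) a b c d (k + 1) =
      (c + n) * (d + n) * saalschutzTerm n a b c d (k + 1) -
        (a + 2 * n + 1) * b * saalschutzTerm n (a + 1) (b + 1) (c + 1) (d + 1) k := by
  rw [mul_saalschutzTerm_succ hk, saalschutzTerm, saalschutzTerm, Nat.add_sub_add_right,
    ascPochhammer_succ_eval_left k b, ascPochhammer_succ_eval_left k (a + n),
    ascPochhammer_succ_eval k (a + _)]
  push_cast
  rw [show a + 1 + n = a + n + 1 by ring, show c + (k + 1) = c + 1 + k by ring,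
    show d + (k + 1) = d + 1 + k by ring, ← add_assoc a]
  linear_combination (-(-1) ^ k * (ascPochhammer R k).eval (a + n + 1) * b *
    (ascPochhammer R k).eval (b + 1) * ((ascPochhammer R (n - k)).eval (c + 1 + k) *
      (ascPochhammer R (n - k)).eval (d + 1 + k))) * add_one_choose_mul_sub_choose_mul n k a

theorem sum_saalschutzTerm_succ (n : ℕ) (a b c d : R) :
    ∑ k ∈ range (n + 2), saalschutzTerm (n + 1) a b c d k =
      (c + n) * (d + n) * ∑ k ∈ range (n + 1), saalschutzTerm n a b c d k -
        (a + 2 * n + 1) * b *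
          ∑ k ∈ range (n + 1), saalschutzTerm n (a + 1) (b + 1) (c + 1) (d + 1) k := by
  have extend : ∑ k ∈ range (n + 1), saalschutzTerm n a b c d k =
      ∑ k ∈ range (n + 2), saalschutzTerm n a b c d k := by
    rw [sum_range_succ _ (n + 1)]
    simp [saalschutzTerm]
  rw [extend, sum_range_succ' _ (n + 1), sum_range_succ' _ (n + 1), mul_add, mul_sum, mul_sum,
    mul_saalschutzTerm_zero, add_sub_right_comm, ← sum_sub_distrib]
  congr 1
  exact sum_congr rfl fun k hk => saalschutzTerm_succ (by simpa [Nat.lt_succ_iff] using hk) a b c d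

theorem sum_saalschutzTerm (n : ℕ) {a b c d : R} (h : c + d = a + b + 1) :
    ∑ k ∈ range (n + 1), saalschutzTerm n a b c d k =
      (ascPochhammer R n).eval (c - b) * (ascPochhammer R n).eval (d - b) := by
  induction n generalizing a b c d with
  | zero => simp [saalschutzTerm]
  | succ n ih =>
    rw [sum_saalschutzTerm_succ, ih h, ih (by linear_combination h), add_sub_add_right_eq_sub,
      add_sub_add_right_eq_sub, ascPochhammer_succ_eval, ascPochhammer_succ_eval]
    linear_combination (b * (ascPochhammer R n).eval (c - b) * (ascPochhammer R n).eval (d - b)) * h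

theorem pfaff_saalschutz {K : Type*} [Field K] (n : ℕ) {a b c d : K} (h : c + d = a + b + 1)
    (hc : (ascPochhammer K n).eval c ≠ 0) (hd : (ascPochhammer K n).eval d ≠ 0) :
    ∑ k ∈ range (n + 1), (-1) ^ k * n.choose k * (ascPochhammer K k).eval (a + n) *
        (ascPochhammer K k).eval b / ((ascPochhammer K k).eval c * (ascPochhammer K k).eval d) =
      (ascPochhammer K n).eval (c - b) * (ascPochhammer K n).eval (d - b) /
        ((ascPochhammer K n).eval c * (ascPochhammer K n).eval d) := by
  rw [← sum_saalschutzTerm n h, sum_div]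
  refine sum_congr rfl fun k hk => ?_
  obtain ⟨m, rfl⟩ := Nat.exists_eq_add_of_le (mem_range_succ_iff.mp hk)
  rw [ascPochhammer_eval_add, mul_ne_zero_iff] at hc hd
  obtain ⟨hc₁, hc₂⟩ := hc
  obtain ⟨hd₁, hd₂⟩ := hd
  rw [saalschutzTerm, ascPochhammer_eval_add k m c, ascPochhammer_eval_add k m d,
    Nat.add_sub_cancel_left]
  field_simp

end Saalschutz

theorem sum_range_two_mul_add_one_of_symm {M : Type*} [AddCommMonoid M] (f : ℕ → M) (n : ℕ)
    (hf : ∀ j < n, f (n - 1 - j) = f (n + (j + 1))) :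
    ∑ k ∈ range (2 * n + 1), f k =
      ∑ j ∈ range (n + 1), (if 0 < j then 2 else 1) • f (n + j) := by
  rw [show 2 * n + 1 = n + (n + 1) by ring, sum_range_add, sum_range_succ', sum_range_succ',
    ← sum_range_reflect, ← add_assoc, ← sum_add_distrib]
  congr 1
  · refine sum_congr rfl fun j hj => ?_
    rw [hf j (mem_range.mp hj), if_pos j.succ_pos, two_nsmul]
  · simp

section Chebyshev

variable (R : Type*) [CommRing R]

theorem fwdDiff_fwdDiff_T (h k : ℤ) :
    Δ_[h] (Δ_[h] (T R)) k = 2 * (T R h - 1) * T R (k + h) := by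
  have key := T_mul_T R (k + h) h
  rw [add_sub_cancel_right] at key
  simp only [fwdDiff]
  linear_combination -key

theorem fwdDiff_iter_two_mul_T (n : ℕ) (h k : ℤ) :
    (Δ_[h])^[2 * n] (T R) k = (2 * (T R h - 1)) ^ n * T R (k + n * h) := by
  induction n generalizing k with
  | zero => simp
  | succ n ih =>
    have closed_form : (Δ_[h])^[2 * n] (T R) =
        fun k => (2 * (T R h - 1)) ^ n * T R (k + n * h) := funext ih
    have second_diff := fwdDiff_fwdDiff_T R h (k + n * h)
    rw [Nat.mul_succ, Function.iterate_succ_apply', Function.iterate_succ_apply', closed_form]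
    simp only [fwdDiff, add_right_comm _ h] at second_diff ⊢
    rw [Nat.cast_succ, add_one_mul (n : ℤ), ← add_assoc]
    linear_combination (2 * (T R h - 1)) ^ n * second_diff

theorem four_mul_one_sub_X_sq_pow_eq_sum (s : ℕ) :
    (4 * (1 - X ^ 2) : R[X]) ^ s =
      ∑ k ∈ range (2 * s + 1), (-1) ^ (s + k) * ((2 * s).choose k : R[X]) *
        T R (2 * k - 2 * s) := by
  have central := (fwdDiff_iter_two_mul_T R s 2 (-2 * s)).symm.trans
    (fwdDiff_iter_eq_sum_shift 2 (T R) (2 * s) (-2 * s))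
  have base : (4 * (1 - X ^ 2) : R[X]) = -1 * (2 * (T R 2 - 1)) := by
    rw [T_two]
    ring
  rw [show (-2 * s + s * 2 : ℤ) = 0 by ring, T_zero, mul_one] at central
  rw [base, mul_pow, central, mul_sum]
  refine sum_congr rfl fun k hk => ?_
  have sign : (-1 : ℤ) ^ (2 * s - k) = (-1) ^ k :=
    neg_one_pow_congr (by grind)
  rw [sign, show (-2 * s + k • 2 : ℤ) = 2 * k - 2 * s by rw [nsmul_eq_mul]; ring, pow_add]
  simp [mul_assoc]

theorem four_mul_one_sub_X_sq_pow (s : ℕ) :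
    (4 * (1 - X ^ 2) : R[X]) ^ s =
      ∑ j ∈ range (s + 1), (if 0 < j then 2 else 1) •
        ((-1) ^ j * ((2 * s).choose (s + j) : R[X]) * T R (2 * j)) := by
  rw [four_mul_one_sub_X_sq_pow_eq_sum, sum_range_two_mul_add_one_of_symm]
  · refine sum_congr rfl fun j _ => ?_
    rw [neg_one_pow_congr (show Even (s + (s + j)) ↔ Even j by grind),
      show (2 * (s + j : ℕ) - 2 * s : ℤ) = 2 * j by push_cast; ring]
  · intro j hj
    rw [neg_one_pow_congr (show Even (s + (s - 1 - j)) ↔ Even (s + (s + (j + 1))) by grind),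
      Nat.choose_symm_of_eq_add (show 2 * s = (s - 1 - j) + (s + (j + 1)) by omega),
      show (2 * (s - 1 - j : ℕ) - 2 * s : ℤ) = -(2 * (s + (j + 1) : ℕ) - 2 * s) by omega, T_neg]

theorem one_sub_X_sq_pow {K : Type*} [Field K] [NeZero (2 : K)] {s r : ℕ} (hs : s ≤ r) :
    (1 - X ^ 2 : K[X]) ^ s =
      ∑ j ∈ range (r + 1), ((if 0 < j then 2 else 1) *
        ((-1) ^ j * (2 * s).choose (s + j) / 4 ^ s) : K) • T K (2 * j) := by
  have four_ne_zero : (4 : K) ≠ 0 := by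
    rw [show (4 : K) = 2 * 2 by norm_num]
    exact mul_ne_zero two_ne_zero two_ne_zero
  have vanish : ∀ j ∈ range (r + 1), j ∉ range (s + 1) →
      ((if 0 < j then 2 else 1) * ((-1) ^ j * (2 * s).choose (s + j) / 4 ^ s) : K) •
        T K (2 * j) = 0 := by
    intro j _ hj
    rw [Nat.choose_eq_zero_of_lt (show 2 * s < s + j by grind)]
    simp
  have scale : (4 * (1 - X ^ 2) : K[X]) ^ s = (4 ^ s : K) • (1 - X ^ 2) ^ s := by
    simp only [mul_pow, smul_eq_C_mul, map_pow, map_ofNat]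
  rw [← sum_subset (range_mono (by omega)) vanish,
    ← inv_smul_smul₀ (pow_ne_zero s four_ne_zero) ((1 - X ^ 2 : K[X]) ^ s), ← scale,
    four_mul_one_sub_X_sq_pow, smul_sum]
  refine sum_congr rfl fun j _ => ?_
  simp only [smul_eq_C_mul, nsmul_eq_mul, div_eq_mul_inv, map_mul, map_pow, map_neg, map_one,
    map_natCast, apply_ite C, apply_ite (Nat.cast (R := K[X])), map_ofNat, Nat.cast_ofNat,
    Nat.cast_one]
  ring

end Chebyshev

section Gegenbauer

variable {K : Type*} [Field K] [CharZero K]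

theorem choose_mul_ascPochhammer_two_mul_add_one (j k : ℕ) :
    ((2 * (j + k)).choose (j + k + j) : K) * (ascPochhammer K k).eval (2 * j + 1 : K) =
      4 ^ k * (j + k).choose j * (ascPochhammer K k).eval (j + 1 / 2 : K) := by
  have dup := ascPochhammer_eval_two_mul k (j + 1 / 2 : K)
  rw [show (2 * (j + 1 / 2) : K) = 2 * j + 1 by ring, show (j + 1 / 2 + 1 / 2 : K) = j + 1 by ring,
    two_mul k, ascPochhammer_eval_add,
    show (2 * j + 1 + k : K) = (2 * j + k : ℕ) + 1 by push_cast; ring,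
    ascPochhammer_eval_natCast_add_one, ascPochhammer_eval_natCast_add_one] at dup
  rw [Nat.choose_symm_of_eq_add (show 2 * (j + k) = (j + k + j) + k by ring),
    Nat.choose_symm_add, show 2 * (j + k) = 2 * j + k + k by ring]
  refine mul_left_cancel₀ (Nat.cast_ne_zero.mpr k.factorial_ne_zero : (k.factorial : K) ≠ 0) ?_
  linear_combination dup

theorem choose_mul_choose_two_mul_div (j n k : ℕ) :
    ((j + n).choose (j + k) : K) * ((2 * (j + k)).choose (j + k + j) / 4 ^ (j + k)) =
      (j + n).choose j / 4 ^ j * (n.choose k * (ascPochhammer K k).eval (j + 1 / 2 : K) /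
        (ascPochhammer K k).eval (2 * j + 1 : K)) := by
  have trinomial : ((j + n).choose (j + k) : K) * (j + k).choose j =
      (j + n).choose j * n.choose k := by
    have := Nat.choose_mul (n := j + n) (Nat.le_add_right j k)
    rw [Nat.add_sub_cancel_left, Nat.add_sub_cancel_left] at this
    exact_mod_cast this
  have central := choose_mul_ascPochhammer_two_mul_add_one (K := K) j k
  have hne := ascPochhammer_eval_natCast_add_one_ne_zero K (2 * j) k
  rw [Nat.cast_mul, Nat.cast_ofNat] at hne
  generalize (ascPochhammer K k).eval (2 * j + 1 : K) = p at *
  generalize (ascPochhammer K k).eval (j + 1 / 2 : K) = q at *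
  rw [pow_add]
  field_simp
  linear_combination ((j + n).choose (j + k) : K) * central + 4 ^ k * q * trinomial

/-- The coefficient of `(1 - X ^ 2) ^ s` in the normalized Gegenbauer polynomial of degree `2r`. -/
noncomputable def gegenbauerCoeff (r s : ℕ) (l : K) : K :=
  (-1) ^ s * r.choose s * ((ascPochhammer K s).eval (l + r) / (ascPochhammer K s).eval (l + 1 / 2))

/-- The normalized Gegenbauer polynomial `P_{2r}^{(l - 1/2)}`, in the variable `X = cos θ`. -/
noncomputable def normalizedGegenbauer (r : ℕ) (l : K) : K[X] :=
  ∑ s ∈ range (r + 1), gegenbauerCoeff r s l • (1 - X ^ 2) ^ s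

/-- The coefficient of `T (2r - 2s)` in `normalizedGegenbauer r l`. It is `dcoef` over an arbitrary
field, with `(2r + 1 - s)_s / s!` written as a binomial coefficient. -/
noncomputable def gegenbauerChebyshevCoeff (r s : ℕ) (l : K) : K :=
  (if s < r then 2 else 1) * ((2 * r).choose s * (ascPochhammer K s).eval l *
    (ascPochhammer K (r - s)).eval (l + r) / (4 ^ r * (ascPochhammer K r).eval (l + 1 / 2)))

theorem gegenbauerCoeff_mul_choose_two_mul (j n k : ℕ) (l : K) :
    gegenbauerCoeff (j + n) (j + k) l *
        ((-1) ^ j * (2 * (j + k)).choose (j + k + j) / 4 ^ (j + k)) =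
      (j + n).choose j * (ascPochhammer K j).eval (l + (j + n : ℕ)) /
          (4 ^ j * (ascPochhammer K j).eval (l + 1 / 2)) *
        ((-1) ^ k * n.choose k * (ascPochhammer K k).eval (l + 2 * j + n) *
          (ascPochhammer K k).eval (j + 1 / 2 : K) /
          ((ascPochhammer K k).eval (2 * j + 1 : K) *
            (ascPochhammer K k).eval (l + 1 / 2 + j))) := by
  have sign : (-1 : K) ^ (j + k) * (-1) ^ j = (-1) ^ k := by
    rw [← pow_add, neg_one_pow_congr (show Even (j + k + j) ↔ Even k by grind)]
  rw [gegenbauerCoeff, ascPochhammer_eval_add j k, ascPochhammer_eval_add j k,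
    show l + (j + n : ℕ) + (j : K) = l + 2 * j + n by push_cast; ring]
  set A := (ascPochhammer K j).eval (l + (j + n : ℕ)) * (ascPochhammer K k).eval (l + 2 * j + n) /
    ((ascPochhammer K j).eval (l + 1 / 2) * (ascPochhammer K k).eval (l + 1 / 2 + j)) with hA
  calc _ = (-1 : K) ^ (j + k) * (-1) ^ j * A *
        ((j + n).choose (j + k) * ((2 * (j + k)).choose (j + k + j) / 4 ^ (j + k))) := by ring
    _ = _ := by
      rw [sign, choose_mul_choose_two_mul_div, hA]
      ring

theorem sum_gegenbauerCoeff_mul_choose_two_mul (j n : ℕ) {l : K}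
    (hl : (ascPochhammer K (j + n)).eval (l + 1 / 2) ≠ 0) :
    ∑ s ∈ range (j + n + 1), gegenbauerCoeff (j + n) s l *
        ((-1) ^ j * (2 * s).choose (s + j) / 4 ^ s) =
      (2 * (j + n)).choose n * (ascPochhammer K n).eval l *
        (ascPochhammer K j).eval (l + (j + n : ℕ)) /
        (4 ^ (j + n) * (ascPochhammer K (j + n)).eval (l + 1 / 2)) := by
  have vanish : ∀ s ∈ range j, gegenbauerCoeff (j + n) s l *
      ((-1) ^ j * (2 * s).choose (s + j) / 4 ^ s) = 0 := by
    intro s hs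
    rw [Nat.choose_eq_zero_of_lt (by grind)]
    simp
  have hc : (ascPochhammer K n).eval (2 * j + 1 : K) ≠ 0 := by
    exact_mod_cast ascPochhammer_eval_natCast_add_one_ne_zero K (2 * j) n
  rw [ascPochhammer_eval_add] at hl ⊢
  have summation := pfaff_saalschutz n
    (show (2 * j + 1 : K) + (l + 1 / 2 + j) = (l + 2 * j) + (j + 1 / 2) + 1 by ring)
    hc (right_ne_zero_of_mul hl)
  have binomials := choose_mul_choose_two_mul_div (K := K) j n n
  rw [Nat.choose_self, Nat.choose_self, Nat.cast_one, one_mul, one_mul,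
    Nat.choose_symm_of_eq_add (show 2 * (j + n) = (j + n + j) + n by ring)] at binomials
  rw [add_assoc j n 1, sum_range_add, sum_eq_zero vanish, zero_add]
  simp only [gegenbauerCoeff_mul_choose_two_mul]
  rw [← mul_sum, summation, show (2 * j + 1 - (j + 1 / 2) : K) = j + 1 / 2 by ring,
    show l + 1 / 2 + j - (j + 1 / 2 : K) = l by ring]
  linear_combination (-(ascPochhammer K n).eval l * (ascPochhammer K j).eval (l + (j + n : ℕ)) /
    ((ascPochhammer K j).eval (l + 1 / 2) * (ascPochhammer K n).eval (l + 1 / 2 + j))) * binomials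

theorem stmt9_general (r : ℕ) {l : K} (hl : (ascPochhammer K r).eval (l + 1 / 2) ≠ 0) :
    normalizedGegenbauer r l =
      ∑ s ∈ range (r + 1), gegenbauerChebyshevCoeff r s l • T K (2 * r - 2 * s) := by
  have coeff : ∀ j ∈ range (r + 1), ∑ s ∈ range (r + 1), gegenbauerCoeff r s l *
      ((if 0 < j then 2 else 1) * ((-1) ^ j * (2 * s).choose (s + j) / 4 ^ s)) =
        gegenbauerChebyshevCoeff r (r - j) l := by
    intro j hj
    obtain ⟨n, rfl⟩ := Nat.exists_eq_add_of_le (mem_range_succ_iff.mp hj)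
    simp only [mul_left_comm _ (ite _ _ _), ← mul_sum,
      sum_gegenbauerCoeff_mul_choose_two_mul j n hl, gegenbauerChebyshevCoeff,
      Nat.add_sub_cancel_left, Nat.add_sub_cancel_right, Nat.lt_add_left_iff_pos]
  calc normalizedGegenbauer r l
      = ∑ s ∈ range (r + 1), ∑ j ∈ range (r + 1), (gegenbauerCoeff r s l *
          ((if 0 < j then 2 else 1) * ((-1) ^ j * (2 * s).choose (s + j) / 4 ^ s))) •
            T K (2 * j) := by
        refine sum_congr rfl fun s hs => ?_
        rw [one_sub_X_sq_pow (mem_range_succ_iff.mp hs), smul_sum]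
        simp only [smul_smul]
    _ = ∑ j ∈ range (r + 1), gegenbauerChebyshevCoeff r (r - j) l • T K (2 * j) := by
        rw [sum_comm]
        exact sum_congr rfl fun j hj => by rw [← sum_smul, coeff j hj]
    _ = ∑ s ∈ range (r + 1), gegenbauerChebyshevCoeff r s l • T K (2 * r - 2 * s) := by
        rw [← sum_flip]
        refine sum_congr rfl fun s hs => ?_
        have hs' : s ≤ r := mem_range_succ_iff.mp hs
        rw [Nat.sub_sub_self hs', Nat.cast_sub hs', mul_sub]

end Gegenbauer

theorem poch_eq_ascPochhammer_eval (z : ℝ) (n : ℕ) : poch z n = (ascPochhammer ℝ n).eval z := by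
  induction n with
  | zero => simp [poch]
  | succ n ih => rw [ascPochhammer_succ_eval, ← ih, poch, poch, prod_range_succ]

theorem poch_eq_factorial_mul_choose {r s : ℕ} (hs : s ≤ r) :
    poch (2 * r + 1 - s) s = s.factorial * (2 * r).choose s := by
  obtain ⟨m, hm⟩ := Nat.exists_eq_add_of_le' (show s ≤ 2 * r by omega)
  have cast_eq : (2 * r + 1 - s : ℝ) = m + 1 := by
    rw [sub_eq_iff_eq_add]
    exact_mod_cast by omega
  rw [cast_eq, poch_eq_ascPochhammer_eval, ascPochhammer_eval_natCast_add_one, hm]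

theorem dcoef_eq_gegenbauerChebyshevCoeff {r s : ℕ} (hs : s ≤ r) (l : ℝ) :
    dcoef r s l = gegenbauerChebyshevCoeff r s l := by
  have symbol := poch_eq_factorial_mul_choose hs
  have : (s.factorial : ℝ) ≠ 0 := Nat.cast_ne_zero.mpr s.factorial_ne_zero
  obtain hlt | rfl := hs.lt_or_eq
  · rw [dcoef, gegenbauerChebyshevCoeff, if_pos hlt, if_pos hlt, symbol]
    simp only [poch_eq_ascPochhammer_eval]
    field_simp
  · rw [show (2 * s + 1 - s : ℝ) = s + 1 by ring] at symbol
    rw [dcoef, gegenbauerChebyshevCoeff, if_neg (lt_irrefl s), if_neg (lt_irrefl s), symbol]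
    simp only [poch_eq_ascPochhammer_eval, Nat.sub_self, ascPochhammer_zero, eval_one]
    field_simp

theorem eval_normalizedGegenbauer (r : ℕ) (l t : ℝ) :
    (normalizedGegenbauer r l).eval t =
      ∑ s ∈ range (r + 1), (-1 : ℝ) ^ s * (r.choose s : ℝ) *
        (poch (l + r) s / poch (l + 1 / 2) s) * (1 - t ^ 2) ^ s := by
  simp only [normalizedGegenbauer, gegenbauerCoeff, eval_finsetSum, eval_smul, eval_pow, eval_sub,
    eval_one, eval_X, smul_eq_mul, poch_eq_ascPochhammer_eval]

theorem eval_cos_sum_gegenbauerChebyshevCoeff_smul_T (r : ℕ) (l θ : ℝ) :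
    (∑ s ∈ range (r + 1), gegenbauerChebyshevCoeff r s l • T ℝ (2 * r - 2 * s)).eval
        (Real.cos θ) =
      ∑ s ∈ range (r + 1), dcoef r s l * Real.cos ((2 * r - 2 * s : ℝ) * θ) := by
  rw [eval_finsetSum]
  refine sum_congr rfl fun s hs => ?_
  rw [dcoef_eq_gegenbauerChebyshevCoeff (mem_range_succ_iff.mp hs), eval_smul, smul_eq_mul,
    T_real_cos]
  push_cast
  rfl

/-- decomposition of the normalized Gegenbauer polynomial
P_{2r}^{(lambda-1/2)} in terms of Chebyshev polynomials of the first kind. -/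
theorem stmt9 (r : ℕ) (hr : 1 ≤ r) (l : ℝ) (hl : -(1 / 2 : ℝ) < l) (θ : ℝ) :
    ∑ s ∈ Finset.range (r + 1), (-1 : ℝ) ^ s * (r.choose s : ℝ) *
        (poch (l + r) s / poch (l + 1 / 2) s) * (1 - Real.cos θ ^ 2) ^ s =
      ∑ s ∈ Finset.range (r + 1), dcoef r s l *
        Real.cos ((2 * r - 2 * s : ℝ) * θ) := by
  have hne := (ascPochhammer_pos r (l + 1 / 2) (by linarith)).ne'
  rw [← eval_normalizedGegenbauer, stmt9_general r hne,
    eval_cos_sum_gegenbauerChebyshevCoeff_smul_T]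
end

section
/- Let a > 0 with 2/a ∈ ℕ, κ ≥ 0 with λ = (2κ−1)/a ≥ −1/2, and let f be a Schwartz function on ℝ. Define the one-dimensional (κ,a)-generalized Fourier transform F_{κ,a}(f)(y) = (1/(2 a^{λ} Γ(λ+1))) ∫_ℝ b_{κ,a}(xy) f(x) |x|^{2κ+a−2} dx. Then there exist even Schwartz functions F₁, F₂ on ℝ such that F_{κ,a}(f)(y) = F₁(|y|^{a/2}) + y · F₂(|y|^{a/2}) for all y ∈ ℝ. -/
open Real MeasureTheory Finset SchwartzMap

/-- Normalized Bessel function j_lambda(v). -/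
noncomputable def nbessel (l v : ℝ) : ℝ :=
  Real.Gamma (l + 1) *
    ∑' k : ℕ, (-1 : ℝ) ^ k / (Nat.factorial k * Real.Gamma (k + l + 1)) * (v / 2) ^ (2 * k)

/-- Kernel of the one-dimensional (kappa,a)-generalized Fourier transform. -/
noncomputable def bker (κ a : ℝ) (x : ℝ) : ℂ :=
  (nbessel ((2 * κ - 1) / a) ((2 / a) * |x| ^ (a / 2)) : ℂ)
    + Complex.exp (-(Real.pi / a) * Complex.I) * ((a ^ (-(2 / a)) : ℝ) : ℂ)
      * ((Real.Gamma ((2 * κ - 1) / a + 1) / Real.Gamma ((2 * κ - 1) / a + 1 + 2 / a) : ℝ) : ℂ)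
      * (x : ℂ) * (nbessel ((2 * κ - 1) / a + 2 / a) ((2 / a) * |x| ^ (a / 2)) : ℂ)

/-- The one-dimensional (kappa,a)-generalized Fourier transform of a Schwartz function. -/
noncomputable def genFourier (κ a : ℝ) (f : SchwartzMap ℝ ℂ) (y : ℝ) : ℂ :=
  ((1 / (2 * a ^ ((2 * κ - 1) / a) * Real.Gamma ((2 * κ - 1) / a + 1)) : ℝ) : ℂ) *
    ∫ x : ℝ, bker κ a (x * y) * f x * ((|x| ^ (2 * κ + a - 2) : ℝ) : ℂ)

/-!
Write `f(x) = p(x) + x q(x)` with `p`, `q` even Schwartz functions. The even part of the kernel only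
sees `p` and the odd part only `q`, and for `2 / a = R` the substitution `x = t ^ R` on the
half-line turns the two integrals into Hankel transforms of the even Schwartz functions `p(t ^ R)`
and `q(t ^ R)`, of orders `λ = (2 * κ - 1) / a` and `λ + 2 / a`, evaluated at `R |y| ^ (a / 2)`.

The Hankel transform `H` of an even Schwartz function is Schwartz: its derivative is `v` times a
Hankel transform of the next order, and Green's identity gives `v² H h = -H (Δ h)` for the Bessel
operator `Δ h = h'' + (2 l + 1) / t • h'`, hence rapid decay. Here `Δ h` is again an even Schwartz
function, because an odd Schwartz function divided by `t` is one. The kernel is bounded for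
`-1/2 ≤ l`, since `j² + (j')²` decreases on the half-line, and for `-1 < l` it grows at most
quadratically, by the recurrence between `j_l`, `j_{l+1}` and `j_{l+2}`.
-/

open scoped ContDiff

section SchwartzSpace

variable {E : Type*} [NormedAddCommGroup E] [NormedSpace ℝ E]

theorem iteratedDeriv_mem_of_hasDerivAt_mem {S : Set (ℝ → E)}
    (hS : ∀ F ∈ S, ∃ F' ∈ S, ∀ x, HasDerivAt F (F' x) x) (n : ℕ) {F : ℝ → E} (hF : F ∈ S) :
    iteratedDeriv n F ∈ S := by
  induction n generalizing F with
  | zero => rwa [iteratedDeriv_zero]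
  | succ n ih =>
    obtain ⟨F', hF', hderiv⟩ := hS F hF
    rw [iteratedDeriv_succ', show deriv F = F' from funext fun x => (hderiv x).deriv]
    exact ih hF'

theorem contDiff_infty_of_hasDerivAt_mem {S : Set (ℝ → E)}
    (hS : ∀ F ∈ S, ∃ F' ∈ S, ∀ x, HasDerivAt F (F' x) x) {F : ℝ → E} (hF : F ∈ S) :
    ContDiff ℝ ∞ F := by
  refine contDiff_of_differentiable_iteratedDeriv fun n _ => ?_
  obtain ⟨_, -, hderiv⟩ := hS _ (iteratedDeriv_mem_of_hasDerivAt_mem hS n hF)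
  exact fun x => (hderiv x).differentiableAt

theorem exists_schwartzMap_of_hasDerivAt_mem {S : Set (ℝ → E)}
    (hS : ∀ F ∈ S, ∃ F' ∈ S, ∀ x, HasDerivAt F (F' x) x)
    (hdecay : ∀ F ∈ S, ∀ k : ℕ, ∃ C : ℝ, ∀ x, |x| ^ k * ‖F x‖ ≤ C) {F : ℝ → E} (hF : F ∈ S) :
    ∃ f : 𝓢(ℝ, E), ⇑f = F := by
  refine ⟨⟨F, contDiff_infty_of_hasDerivAt_mem hS hF, fun k n => ?_⟩, rfl⟩
  obtain ⟨C, hC⟩ := hdecay _ (iteratedDeriv_mem_of_hasDerivAt_mem hS n hF) k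
  exact ⟨C, fun x => norm_iteratedFDeriv_eq_norm_iteratedDeriv (𝕜 := ℝ) (f := F) ▸ hC x⟩

theorem exists_schwartzMap_of_hasDerivAt_mem_span {B : Set (ℝ → E)}
    (hB : ∀ F ∈ B, ∃ F' ∈ Submodule.span ℝ B, ∀ x, HasDerivAt F (F' x) x)
    (hdecay : ∀ F ∈ B, ∀ k : ℕ, ∃ C : ℝ, ∀ x, |x| ^ k * ‖F x‖ ≤ C) {F : ℝ → E} (hF : F ∈ B) :
    ∃ f : 𝓢(ℝ, E), ⇑f = F := by
  refine exists_schwartzMap_of_hasDerivAt_mem (S := Submodule.span ℝ B) (fun F hF => ?_)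
    (fun F hF k => ?_) (Submodule.subset_span hF)
  · induction hF using Submodule.span_induction with
    | mem F hF => exact hB F hF
    | zero => exact ⟨0, Submodule.zero_mem _, fun x => hasDerivAt_const x 0⟩
    | add F G _ _ ihF ihG =>
      obtain ⟨F', hF', hF⟩ := ihF
      obtain ⟨G', hG', hG⟩ := ihG
      exact ⟨F' + G', Submodule.add_mem _ hF' hG', fun x => (hF x).add (hG x)⟩
    | smul c F _ ih =>
      obtain ⟨F', hF', hF⟩ := ih
      exact ⟨c • F', Submodule.smul_mem _ c hF', fun x => (hF x).const_smul c⟩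
  · induction hF using Submodule.span_induction with
    | mem F hF => exact hdecay F hF k
    | zero => exact ⟨0, fun x => by simp⟩
    | add F G _ _ ihF ihG =>
      obtain ⟨C, hC⟩ := ihF
      obtain ⟨C', hC'⟩ := ihG
      refine ⟨C + C', fun x => ?_⟩
      calc |x| ^ k * ‖F x + G x‖ ≤ |x| ^ k * (‖F x‖ + ‖G x‖) := by
            gcongr
            exact norm_add_le _ _
        _ ≤ C + C' := by linarith [hC x, hC' x]
    | smul c F _ ih =>
      obtain ⟨C, hC⟩ := ih
      refine ⟨‖c‖ * C, fun x => ?_⟩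
      calc |x| ^ k * ‖c • F x‖ = ‖c‖ * (|x| ^ k * ‖F x‖) := by rw [norm_smul]; ring
        _ ≤ ‖c‖ * C := by gcongr; exact hC x

theorem exists_pow_mul_norm_le_of_pow_smul_eq {F : ℝ → E} (hF : Continuous F) {m : ℕ}
    {H : 𝓢(ℝ, E)} (hH : ∀ t : ℝ, t ^ m • F t = H t) (k : ℕ) :
    ∃ C : ℝ, ∀ t, |t| ^ k * ‖F t‖ ≤ C := by
  obtain ⟨C, hC⟩ :=
    isCompact_Icc.exists_bound_of_continuousOn (hF.continuousOn (s := Set.Icc (-1) 1))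
  refine ⟨max C (SchwartzMap.seminorm ℝ k 0 H), fun t => ?_⟩
  rcases le_or_gt |t| 1 with ht | ht
  · calc |t| ^ k * ‖F t‖ ≤ ‖F t‖ :=
          mul_le_of_le_one_left (norm_nonneg _) (pow_le_one₀ (abs_nonneg t) ht)
      _ ≤ _ := (hC t (abs_le.1 ht)).trans (le_max_left _ _)
  · calc |t| ^ k * ‖F t‖ ≤ |t| ^ k * (|t| ^ m * ‖F t‖) := by
          gcongr
          exact le_mul_of_one_le_left (norm_nonneg _) (one_le_pow₀ ht.le)
      _ = ‖t‖ ^ k * ‖H t‖ := by rw [← hH, norm_smul, norm_pow, Real.norm_eq_abs]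
      _ ≤ _ := (norm_pow_mul_le_seminorm ℝ H k t).trans (le_max_right _ _)

theorem exists_pow_smul_deriv_eq {F : ℝ → E} (hF : Differentiable ℝ F) {m : ℕ} {H : 𝓢(ℝ, E)}
    (hH : ∀ t : ℝ, t ^ m • F t = H t) :
    ∃ H' : 𝓢(ℝ, E), ∀ t : ℝ, t ^ (m + 1) • deriv F t = H' t := by
  refine ⟨smulLeftCLM E (fun t : ℝ => t) (derivCLM ℝ E H) - (m : ℝ) • H, fun t => ?_⟩
  have hderiv : deriv H t = t ^ m • deriv F t + ((m : ℝ) * t ^ (m - 1)) • F t :=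
    (((hasDerivAt_pow m t).smul (hF t).hasDerivAt).congr_of_eventuallyEq
      (.of_forall fun x => (hH x).symm)).deriv
  rw [sub_apply, smul_apply, smulLeftCLM_apply_apply (by fun_prop), derivCLM_apply, hderiv, ← hH]
  cases m with
  | zero => simp
  | succ m =>
    rw [Nat.add_sub_cancel]
    module

theorem exists_schwartzMap_of_pow_smul_eq {F : ℝ → E} (hF : ContDiff ℝ ∞ F) {m : ℕ}
    {H : 𝓢(ℝ, E)} (hH : ∀ t : ℝ, t ^ m • F t = H t) : ∃ f : 𝓢(ℝ, E), ⇑f = F := by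
  refine exists_schwartzMap_of_hasDerivAt_mem
    (S := {F | ContDiff ℝ ∞ F ∧ ∃ (m : ℕ) (H : 𝓢(ℝ, E)), ∀ t : ℝ, t ^ m • F t = H t})
    ?_ ?_ ⟨hF, m, H, hH⟩
  · rintro F ⟨hF, m, H, hH⟩
    obtain ⟨hdiff, hF'⟩ := contDiff_infty_iff_deriv.1 hF
    exact ⟨deriv F, ⟨hF', m + 1, exists_pow_smul_deriv_eq hdiff hH⟩,
      fun x => (hdiff x).hasDerivAt⟩
  · rintro F ⟨hF, m, H, hH⟩
    exact exists_pow_mul_norm_le_of_pow_smul_eq hF.continuous hH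

/-- The moments `∫₀¹ sᵐ h(s t) ds` of the dilates of a Schwartz function; for `h'` and `m = 0` this
is the quotient `(h(t) - h(0)) / t`, and the family is closed under differentiation. -/
noncomputable def dilateMoment (m : ℕ) (h : 𝓢(ℝ, E)) (t : ℝ) : E :=
  ∫ s in (0 : ℝ)..1, s ^ m • h (s * t)

theorem hasDerivAt_dilateMoment (m : ℕ) (h : 𝓢(ℝ, E)) (t : ℝ) :
    HasDerivAt (dilateMoment m h) (dilateMoment (m + 1) (derivCLM ℝ E h) t) t := by
  have hcont (m : ℕ) (h : 𝓢(ℝ, E)) (t : ℝ) : Continuous fun s : ℝ => s ^ m • h (s * t) :=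
    (continuous_id.pow m).smul (h.continuous.comp (by fun_prop))
  refine (intervalIntegral.hasDerivAt_integral_of_dominated_loc_of_deriv_le
    (F := fun t s => s ^ m • h (s * t))
    (F' := fun t s => s ^ (m + 1) • derivCLM ℝ E h (s * t))
    (bound := fun _ => SchwartzMap.seminorm ℝ 0 0 (derivCLM ℝ E h))
    Filter.univ_mem (.of_forall fun t => (hcont m h t).aestronglyMeasurable)
    ((hcont m h t).intervalIntegrable _ _) (hcont (m + 1) _ t).aestronglyMeasurable
    (.of_forall fun s hs t _ => ?_) intervalIntegrable_const (.of_forall fun s _ t _ => ?_)).2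
  · rw [Set.uIoc_of_le zero_le_one] at hs
    calc ‖s ^ (m + 1) • derivCLM ℝ E h (s * t)‖ = s ^ (m + 1) * ‖derivCLM ℝ E h (s * t)‖ := by
          rw [norm_smul, norm_pow, Real.norm_of_nonneg hs.1.le]
      _ ≤ ‖derivCLM ℝ E h (s * t)‖ :=
          mul_le_of_le_one_left (norm_nonneg _) (pow_le_one₀ hs.1.le hs.2)
      _ ≤ _ := norm_le_seminorm ℝ _ _
  · have hcomp := (h.hasDerivAt (s * t)).scomp t ((hasDerivAt_id t).const_mul s)
    refine (hcomp.const_smul (s ^ m)).congr_deriv ?_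
    rw [derivCLM_apply, mul_one, smul_smul, pow_succ]

theorem contDiff_dilateMoment (m : ℕ) (h : 𝓢(ℝ, E)) : ContDiff ℝ ∞ (dilateMoment m h) :=
  contDiff_infty_of_hasDerivAt_mem
    (S := Set.range fun p : ℕ × 𝓢(ℝ, E) => dilateMoment p.1 p.2)
    (Set.forall_mem_range.2 fun p =>
      ⟨_, ⟨(p.1 + 1, derivCLM ℝ E p.2), rfl⟩, hasDerivAt_dilateMoment p.1 p.2⟩)
    ⟨(m, h), rfl⟩

theorem smul_dilateMoment_zero_derivCLM [CompleteSpace E] (h : 𝓢(ℝ, E)) (t : ℝ) :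
    t • dilateMoment 0 (derivCLM ℝ E h) t = h t - h 0 := by
  have hderiv (s : ℝ) : HasDerivAt (fun s => h (s * t)) (t • derivCLM ℝ E h (s * t)) s :=
    ((h.hasDerivAt (s * t)).scomp s ((hasDerivAt_id s).mul_const t)).congr_deriv
      (by rw [one_mul, derivCLM_apply])
  have hFTC := intervalIntegral.integral_eq_sub_of_hasDerivAt (a := 0) (b := 1)
    (fun s _ => hderiv s) (Continuous.intervalIntegrable
      (continuous_const.smul ((derivCLM ℝ E h).continuous.comp (by fun_prop))) _ _)
  simp only [one_mul, zero_mul] at hFTC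
  simp only [dilateMoment, pow_zero, one_smul, ← hFTC, intervalIntegral.integral_smul]

theorem exists_schwartzMap_smul_eq [CompleteSpace E] {h : 𝓢(ℝ, E)} (h0 : h 0 = 0) :
    ∃ g : 𝓢(ℝ, E), ∀ t : ℝ, t • g t = h t := by
  have hmul (t : ℝ) : t • dilateMoment 0 (derivCLM ℝ E h) t = h t := by
    rw [smul_dilateMoment_zero_derivCLM, h0, sub_zero]
  obtain ⟨g, hg⟩ := exists_schwartzMap_of_pow_smul_eq (contDiff_dilateMoment 0 (derivCLM ℝ E h))
    (m := 1) (H := h) (fun t => by rw [pow_one, hmul])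
  exact ⟨g, fun t => by rw [hg, hmul]⟩

theorem exists_schwartzMap_comp_pow (f : 𝓢(ℝ, E)) {n : ℕ} (hn : n ≠ 0) :
    ∃ g : 𝓢(ℝ, E), ∀ t, g t = f (t ^ n) := by
  refine ⟨compCLM ℝ (g := fun t : ℝ => t ^ n) (by fun_prop) ⟨1, 1, fun t => ?_⟩ f, fun _ => rfl⟩
  rw [norm_pow, one_mul, pow_one]
  rcases le_total ‖t‖ 1 with ht | ht
  · exact ht.trans (le_add_of_nonneg_right (by positivity))
  · exact (le_self_pow₀ ht hn).trans (le_add_of_nonneg_left zero_le_one)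

theorem odd_deriv_of_even {f : ℝ → E} (hf : Function.Even f) : Function.Odd (deriv f) := by
  intro t
  have hneg := deriv_comp_neg f t
  simp only [hf.eq] at hneg
  rw [hneg, neg_neg]

theorem even_of_odd_smul {f : ℝ → E} (hf : Function.Odd fun t : ℝ => t • f t) :
    Function.Even f := by
  intro t
  rcases eq_or_ne t 0 with rfl | ht
  · rw [neg_zero]
  · have hneg := hf t
    simp only [neg_smul, neg_inj] at hneg
    exact smul_right_injective E ht hneg

theorem even_comp_pow {β : Type*} {f : ℝ → β} (hf : Function.Even f) (n : ℕ) :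
    Function.Even fun t => f (t ^ n) := by
  intro t
  rcases n.even_or_odd with hn | hn
  · simp only [hn.neg_pow]
  · simp only [hn.neg_pow, hf.eq]

theorem exists_even_schwartzMap_smul_eq_deriv [CompleteSpace E] {h : 𝓢(ℝ, E)}
    (hh : Function.Even h) :
    ∃ g : 𝓢(ℝ, E), Function.Even g ∧ ∀ t : ℝ, t • g t = deriv h t := by
  have hodd := odd_deriv_of_even hh
  have : IsAddTorsionFree E := .of_isTorsionFree ℝ E
  obtain ⟨g, hg⟩ := exists_schwartzMap_smul_eq (h := derivCLM ℝ E h)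
    ((derivCLM_apply ℝ h 0).trans hodd.map_zero)
  simp only [derivCLM_apply] at hg
  exact ⟨g, even_of_odd_smul (by simpa only [hg] using hodd), hg⟩

theorem exists_even_schwartzMap_eq_add_smul [CompleteSpace E] (f : 𝓢(ℝ, E)) :
    ∃ p q : 𝓢(ℝ, E), Function.Even p ∧ Function.Even q ∧ ∀ t : ℝ, f t = p t + t • q t := by
  let fneg := compCLMOfContinuousLinearEquiv ℝ (ContinuousLinearEquiv.neg ℝ) f
  have hneg (t : ℝ) : fneg t = f (-t) := rfl
  have hodd0 : ((2 : ℝ)⁻¹ • (f - fneg)) 0 = 0 := by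
    rw [smul_apply, sub_apply, hneg, neg_zero, sub_self, smul_zero]
  obtain ⟨q, hq⟩ := exists_schwartzMap_smul_eq hodd0
  simp only [smul_apply, sub_apply, hneg] at hq
  refine ⟨(2 : ℝ)⁻¹ • (f + fneg), q, fun t => ?_, even_of_odd_smul fun t => ?_, fun t => ?_⟩
  · simp only [smul_apply, add_apply, hneg, neg_neg, add_comm]
  · simp only [hq, neg_neg, ← smul_neg, neg_sub]
  · simp only [hq, smul_apply, add_apply, hneg]
    module

end SchwartzSpace

section BesselFunction

variable {l : ℝ}

/-- The coefficient of `((v / 2) ^ 2) ^ k` in the power series of `nbessel l v`. -/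
noncomputable def besselCoeff (l : ℝ) (k : ℕ) : ℝ :=
  Real.Gamma (l + 1) * ((-1) ^ k / (Nat.factorial k * Real.Gamma (k + l + 1)))

theorem nbessel_eq_tsum (l v : ℝ) :
    nbessel l v = ∑' k, besselCoeff l k * ((v / 2) ^ 2) ^ k := by
  rw [nbessel, ← tsum_mul_left]
  simp only [besselCoeff, pow_mul, mul_assoc]

theorem besselCoeff_zero (hl : -1 < l) : besselCoeff l 0 = 1 := by
  have hΓ := (Real.Gamma_pos_of_pos (show 0 < l + 1 by linarith)).ne'
  simp [besselCoeff, hΓ]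

theorem succ_mul_besselCoeff_succ (hl : -1 < l) (k : ℕ) :
    (k + 1) * besselCoeff l (k + 1) = -(besselCoeff (l + 1) k / (l + 1)) := by
  have hl1 : l + 1 ≠ 0 := by linarith
  have hΓ : Real.Gamma (k + (l + 1) + 1) ≠ 0 :=
    (Real.Gamma_pos_of_pos (by linarith [k.cast_nonneg (α := ℝ)])).ne'
  have hk : (k : ℝ) + 1 ≠ 0 := by positivity
  have hfact : (k.factorial : ℝ) ≠ 0 := by positivity
  have harg : ((k + 1 : ℕ) : ℝ) + l + 1 = k + (l + 1) + 1 := by push_cast; ring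
  rw [besselCoeff, besselCoeff, harg, Real.Gamma_add_one hl1, Nat.factorial_succ]
  push_cast
  field_simp
  ring

theorem add_mul_besselCoeff (hl : -1 < l) (k : ℕ) :
    (l + 1 + k) * besselCoeff (l + 1) k = (l + 1) * besselCoeff l k := by
  have hl1 : l + 1 ≠ 0 := by linarith
  have hpos : (0 : ℝ) < k + l + 1 := by linarith [k.cast_nonneg (α := ℝ)]
  have hΓ := (Real.Gamma_pos_of_pos hpos).ne'
  have hfact : (k.factorial : ℝ) ≠ 0 := by positivity
  have harg : (k : ℝ) + (l + 1) + 1 = (k + l + 1) + 1 := by ring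
  rw [besselCoeff, besselCoeff, harg, Real.Gamma_add_one hl1, Real.Gamma_add_one hpos.ne']
  field_simp
  ring

theorem besselCoeff_succ (hl : -1 < l) (k : ℕ) :
    besselCoeff l (k + 1) = -(besselCoeff l k / ((k + 1) * (l + 1 + k))) := by
  have hl1 : l + 1 ≠ 0 := by linarith
  have hlk : l + 1 + k ≠ 0 := by linarith [k.cast_nonneg (α := ℝ)]
  have hk : (k : ℝ) + 1 ≠ 0 := by positivity
  have hsucc := succ_mul_besselCoeff_succ hl k
  field_simp at hsucc ⊢
  apply mul_left_cancel₀ hl1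
  linear_combination (l + 1 + k) * hsucc - add_mul_besselCoeff hl k

theorem summable_besselCoeff_mul_pow (hl : -1 < l) (u : ℝ) :
    Summable fun k => besselCoeff l k * u ^ k := by
  refine summable_of_ratio_norm_eventually_le (r := 1 / 2) (by norm_num) ?_
  filter_upwards [Filter.eventually_ge_atTop ⌈2 * |u|⌉₊] with k hk
  have hlk : (0 : ℝ) < l + 1 + k := by linarith [k.cast_nonneg (α := ℝ)]
  have hratio : |u| / ((k + 1) * (l + 1 + k)) ≤ 1 / 2 := by
    rw [div_le_iff₀ (by positivity)]
    nlinarith [Nat.ceil_le.1 hk, k.cast_nonneg (α := ℝ)]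
  calc ‖besselCoeff l (k + 1) * u ^ (k + 1)‖
      = |u| / ((k + 1) * (l + 1 + k)) * ‖besselCoeff l k * u ^ k‖ := by
        rw [besselCoeff_succ hl, norm_mul, norm_mul, norm_neg, norm_div, norm_pow, norm_pow,
          Real.norm_of_nonneg (show 0 ≤ ((k : ℝ) + 1) * (l + 1 + k) by positivity), pow_succ,
          Real.norm_eq_abs u]
        ring
    _ ≤ 1 / 2 * ‖besselCoeff l k * u ^ k‖ := by gcongr

theorem summable_besselCoeff_mul_deriv_pow (hl : -1 < l) (u : ℝ) :
    Summable fun k : ℕ => besselCoeff l k * (k * u ^ (k - 1)) := by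
  rw [← summable_nat_add_iff 1]
  refine (((summable_besselCoeff_mul_pow (show -1 < l + 1 by linarith) u).div_const
    (l + 1)).neg).congr fun k => ?_
  push_cast
  linear_combination -(u ^ k) * succ_mul_besselCoeff_succ hl k

theorem tsum_besselCoeff_mul_deriv_pow (hl : -1 < l) (u : ℝ) :
    ∑' k : ℕ, besselCoeff l k * (k * u ^ (k - 1)) =
      -((∑' k, besselCoeff (l + 1) k * u ^ k) / (l + 1)) := by
  rw [(summable_besselCoeff_mul_deriv_pow hl u).tsum_eq_zero_add, ← tsum_div_const, ← tsum_neg]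
  simp only [Nat.cast_zero, zero_mul, mul_zero, zero_add]
  refine tsum_congr fun k => ?_
  push_cast
  linear_combination u ^ k * succ_mul_besselCoeff_succ hl k

theorem hasDerivAt_tsum_besselCoeff (hl : -1 < l) (u : ℝ) :
    HasDerivAt (fun u => ∑' k, besselCoeff l k * u ^ k)
      (-((∑' k, besselCoeff (l + 1) k * u ^ k) / (l + 1))) u := by
  rw [← tsum_besselCoeff_mul_deriv_pow hl]
  have hmem : u ∈ Metric.ball (0 : ℝ) (|u| + 1) := by simp
  refine hasDerivAt_tsum_of_isPreconnected (g := fun k u => besselCoeff l k * u ^ k)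
    (g' := fun k u => besselCoeff l k * (k * u ^ (k - 1)))
    (summable_besselCoeff_mul_deriv_pow hl (|u| + 1)).norm Metric.isOpen_ball
    (convex_ball _ _).isPreconnected (fun k y _ => (hasDerivAt_pow k y).const_mul _)
    (fun k y hy => ?_) hmem (summable_besselCoeff_mul_pow hl u) hmem
  rw [norm_mul, norm_mul, norm_mul, norm_mul, norm_pow, norm_pow]
  gcongr
  rw [mem_ball_zero_iff] at hy
  exact hy.le.trans (le_abs_self _)

theorem hasDerivAt_nbessel (hl : -1 < l) (v : ℝ) :
    HasDerivAt (nbessel l) (-(v / (2 * l + 2) * nbessel (l + 1) v)) v := by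
  have hsq : HasDerivAt (fun v : ℝ => (v / 2) ^ 2) (v / 2) v := by
    refine (((hasDerivAt_id' v).div_const 2).pow 2).congr_deriv ?_
    ring
  have hcomp := (hasDerivAt_tsum_besselCoeff hl ((v / 2) ^ 2)).comp v hsq
  rw [← nbessel_eq_tsum] at hcomp
  have hl1 : l + 1 ≠ 0 := by linarith
  refine (hcomp.congr_deriv ?_).congr_of_eventuallyEq (.of_forall (nbessel_eq_tsum l))
  field_simp

theorem continuous_nbessel (hl : -1 < l) : Continuous (nbessel l) :=
  continuous_iff_continuousAt.2 fun v => (hasDerivAt_nbessel hl v).continuousAt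

theorem even_nbessel (l : ℝ) : Function.Even (nbessel l) := fun v => by
  simp only [nbessel_eq_tsum, neg_div, neg_sq]

theorem nbessel_zero (hl : -1 < l) : nbessel l 0 = 1 := by
  rw [nbessel_eq_tsum, tsum_eq_single 0 (by intro k hk; simp [hk])]
  simp [besselCoeff_zero hl]

theorem add_one_mul_tsum_besselCoeff (hl : -1 < l) (u : ℝ) :
    (l + 1) * ∑' k, besselCoeff l k * u ^ k =
      (l + 1) * (∑' k, besselCoeff (l + 1) k * u ^ k)
        - u / (l + 2) * ∑' k, besselCoeff (l + 2) k * u ^ k := by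
  have hl1 : -1 < l + 1 := by linarith
  have hs := summable_besselCoeff_mul_pow hl u
  have hs1 := summable_besselCoeff_mul_pow hl1 u
  have hs2 := summable_besselCoeff_mul_pow (show -1 < l + 2 by linarith) u
  have hterm (k : ℕ) : (l + 1) * (besselCoeff l (k + 1) * u ^ (k + 1))
      = (l + 1) * (besselCoeff (l + 1) (k + 1) * u ^ (k + 1))
        - u / (l + 2) * (besselCoeff (l + 2) k * u ^ k) := by
    have hadd := add_mul_besselCoeff hl (k + 1)
    have hsucc := succ_mul_besselCoeff_succ hl1 k
    rw [show l + 1 + 1 = l + 2 by ring] at hsucc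
    push_cast at hadd
    linear_combination -u ^ (k + 1) * hadd + u ^ (k + 1) * hsucc
  rw [hs.tsum_eq_zero_add, hs1.tsum_eq_zero_add, mul_add, mul_add, ← tsum_mul_left,
    ← tsum_mul_left, ← tsum_mul_left, add_sub_assoc, ← Summable.tsum_sub
      (((summable_nat_add_iff 1).2 hs1).mul_left _) (hs2.mul_left _),
    besselCoeff_zero hl, besselCoeff_zero hl1, tsum_congr hterm]

theorem nbessel_recurrence (hl : -1 < l) (v : ℝ) :
    (2 * l + 2) * nbessel (l + 1) v - v ^ 2 / (2 * l + 4) * nbessel (l + 2) v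
      = (2 * l + 2) * nbessel l v := by
  have hv : v ^ 2 / (2 * l + 4) = 2 * ((v / 2) ^ 2 / (l + 2)) := by
    have hl2 : 2 * l + 4 ≠ 0 := by linarith
    have hl2' : l + 2 ≠ 0 := by linarith
    field_simp
    ring
  rw [nbessel_eq_tsum, nbessel_eq_tsum, nbessel_eq_tsum, hv]
  linear_combination -2 * add_one_mul_tsum_besselCoeff hl ((v / 2) ^ 2)

theorem nbessel_eq_sub (hl : -1 < l) (v : ℝ) :
    nbessel l v =
      nbessel (l + 1) v - v ^ 2 / (2 * l + 4) * nbessel (l + 2) v / (2 * l + 2) := by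
  have hl2 : 2 * l + 2 ≠ 0 := by linarith
  apply mul_left_cancel₀ hl2
  rw [← nbessel_recurrence hl v, mul_sub, mul_div_cancel₀ _ hl2]

theorem hasDerivAt_nbessel_sq_add_sq (hl : -1 < l) (v : ℝ) :
    HasDerivAt (fun v => nbessel l v ^ 2 + (v / (2 * l + 2) * nbessel (l + 1) v) ^ 2)
      (-(2 * (2 * l + 1) * v * (nbessel (l + 1) v / (2 * l + 2)) ^ 2)) v := by
  have hj := (hasDerivAt_nbessel hl v).fun_pow 2
  have hj' := ((((hasDerivAt_id' v).div_const (2 * l + 2)).fun_mul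
    (hasDerivAt_nbessel (show -1 < l + 1 by linarith) v)).fun_pow 2)
  refine (hj.fun_add hj').congr_deriv ?_
  have hl2 : 2 * l + 2 ≠ 0 := by linarith
  rw [nbessel_eq_sub hl v, show l + 1 + 1 = l + 2 by ring,
    show 2 * (l + 1) + 2 = 2 * l + 4 by ring, show 2 * l + 1 = 2 * l + 2 - 1 by ring]
  generalize 2 * l + 2 = c at hl2
  simp only [Nat.cast_ofNat, Nat.reduceSub, pow_one]
  field_simp
  ring

-- The energy `j² + (j')²` of the Bessel equation decreases on the positive half-line.
theorem abs_nbessel_le_one (hl : -(1 / 2) ≤ l) (v : ℝ) : |nbessel l v| ≤ 1 := by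
  wlog hv : 0 ≤ v generalizing v
  · rw [← even_nbessel]
    exact this (-v) (by linarith)
  have hl' : -1 < l := by linarith
  have hanti : AntitoneOn
      (fun v => nbessel l v ^ 2 + (v / (2 * l + 2) * nbessel (l + 1) v) ^ 2) (Set.Ici 0) := by
    have hderiv := hasDerivAt_nbessel_sq_add_sq hl'
    refine antitoneOn_of_deriv_nonpos (convex_Ici 0)
      (fun v _ => (hderiv v).continuousAt.continuousWithinAt)
      (fun v _ => (hderiv v).differentiableAt.differentiableWithinAt) fun v hv => ?_
    rw [interior_Ici, Set.mem_Ioi] at hv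
    have hl1 : 0 ≤ 2 * l + 1 := by linarith
    rw [(hderiv v).deriv, neg_nonpos]
    positivity
  have hle := hanti Set.self_mem_Ici hv hv
  simp only [nbessel_zero hl', zero_div, zero_mul] at hle
  rw [← sq_le_one_iff_abs_le_one]
  linarith [sq_nonneg (v / (2 * l + 2) * nbessel (l + 1) v)]

theorem exists_abs_nbessel_le (hl : -1 < l) : ∃ C : ℝ, ∀ v, |nbessel l v| ≤ C * (1 + v ^ 2) := by
  have hl2 : 0 < 2 * l + 2 := by linarith
  have hl4 : 1 ≤ 2 * l + 4 := by linarith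
  refine ⟨1 + 1 / (2 * l + 2), fun v => ?_⟩
  have hj1 := abs_nbessel_le_one (show -(1 / 2) ≤ l + 1 by linarith) v
  have hj2 := abs_nbessel_le_one (show -(1 / 2) ≤ l + 2 by linarith) v
  calc |nbessel l v|
      ≤ |nbessel (l + 1) v| + v ^ 2 / (2 * l + 4) * |nbessel (l + 2) v| / (2 * l + 2) := by
        rw [nbessel_eq_sub hl v]
        refine (abs_sub _ _).trans_eq ?_
        rw [abs_div, abs_mul, abs_of_nonneg (show 0 ≤ v ^ 2 / (2 * l + 4) by positivity),
          abs_of_pos hl2]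
    _ ≤ 1 + v ^ 2 / 1 * 1 / (2 * l + 2) := by gcongr
    _ ≤ (1 + 1 / (2 * l + 2)) * (1 + v ^ 2) := by
        rw [div_one, mul_one, div_eq_mul_one_div]
        have := one_div_pos.2 hl2
        nlinarith [sq_nonneg v]

end BesselFunction

section HankelTransform

variable {E : Type*} [NormedAddCommGroup E] [NormedSpace ℝ E] {l : ℝ}

theorem integrableOn_rpow_mul_norm {s : ℝ} (hs : -1 < s) (h : 𝓢(ℝ, E)) :
    IntegrableOn (fun t : ℝ => t ^ s * ‖h t‖) (Set.Ioi 0) := by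
  have htop : (fun t => ‖h t‖) =O[Filter.atTop] fun t : ℝ => t ^ (-(s + 2)) := by
    refine ((h.isBigO_cocompact_rpow (-(s + 2))).mono atTop_le_cocompact).norm_left.congr'
      .rfl ?_
    filter_upwards [Filter.eventually_ge_atTop 0] with t ht
    rw [Real.norm_of_nonneg ht]
  have hzero : (fun t => ‖h t‖) =O[nhdsWithin 0 (Set.Ioi 0)] fun t : ℝ => t ^ (-(0 : ℝ)) := by
    simp only [neg_zero, Real.rpow_zero]
    exact (h.continuous.norm.tendsto 0).isBigO_one ℝ |>.mono nhdsWithin_le_nhds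
  have hmellin := mellin_convergent_of_isBigO_scalar
    (h.continuous.norm.locallyIntegrable.locallyIntegrableOn _) htop
    (show s + 1 < s + 2 by linarith) hzero (show 0 < s + 1 by linarith)
  simpa only [add_sub_cancel_right] using hmellin

theorem integrableOn_nbessel_mul_rpow_smul (hl : -1 < l) {s p : ℝ} (hs : -1 < s) (hp : 0 ≤ p)
    (h : 𝓢(ℝ, E)) (c : ℝ) :
    IntegrableOn (fun t : ℝ => (nbessel l (c * t ^ p) * t ^ s) • h t) (Set.Ioi 0) := by
  obtain ⟨C, hC⟩ := exists_abs_nbessel_le hl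
  refine Integrable.mono' (((integrableOn_rpow_mul_norm hs h).const_mul C).add
    ((integrableOn_rpow_mul_norm (show -1 < p * 2 + s by linarith) h).const_mul (C * c ^ 2)))
    (ContinuousOn.aestronglyMeasurable (fun t ht => ?_) measurableSet_Ioi) ?_
  · have hrpow (q : ℝ) : ContinuousAt (fun t : ℝ => t ^ q) t :=
      Real.continuousAt_rpow_const t q (.inl (ne_of_gt ht))
    exact (((continuous_nbessel hl).continuousAt.comp (continuousAt_const.mul (hrpow p))).mul
      (hrpow s)).smul h.continuous.continuousAt |>.continuousWithinAt
  · filter_upwards [ae_restrict_mem measurableSet_Ioi] with t ht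
    rw [Set.mem_Ioi] at ht
    calc ‖(nbessel l (c * t ^ p) * t ^ s) • h t‖
        = |nbessel l (c * t ^ p)| * (t ^ s * ‖h t‖) := by
          rw [norm_smul, norm_mul, Real.norm_eq_abs, Real.norm_of_nonneg (by positivity),
            mul_assoc]
      _ ≤ C * (1 + (c * t ^ p) ^ 2) * (t ^ s * ‖h t‖) := by
          gcongr
          exact hC _
      _ = C * (t ^ s * ‖h t‖) + C * c ^ 2 * (t ^ (p * 2 + s) * ‖h t‖) := by
          rw [Real.rpow_add ht, Real.rpow_mul ht.le, Real.rpow_two]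
          ring

theorem integrableOn_nbessel_mul_smul (hl : -1 < l) {s : ℝ} (hs : -1 < s) (h : 𝓢(ℝ, E))
    (v : ℝ) : IntegrableOn (fun t : ℝ => (nbessel l (v * t) * t ^ s) • h t) (Set.Ioi 0) := by
  simpa only [Real.rpow_one] using integrableOn_nbessel_mul_rpow_smul hl hs zero_le_one h v

/-- The Hankel transform of order `l`, normalized so that its kernel is `nbessel l`. -/
noncomputable def hankelTransform (l : ℝ) (h : ℝ → E) (v : ℝ) : E :=
  ∫ t in Set.Ioi (0 : ℝ), (nbessel l (v * t) * t ^ (2 * l + 1)) • h t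

theorem even_hankelTransform (l : ℝ) (h : ℝ → E) : Function.Even (hankelTransform l h) :=
  fun v => by simp only [hankelTransform, neg_mul, (even_nbessel l).eq]

theorem hankelTransform_sub (hl : -1 < l) (h₁ h₂ : 𝓢(ℝ, E)) (v : ℝ) :
    hankelTransform l ⇑(h₁ - h₂) v = hankelTransform l h₁ v - hankelTransform l h₂ v := by
  have hint := integrableOn_nbessel_mul_smul (E := E) hl (show -1 < 2 * l + 1 by linarith)
  simp only [hankelTransform, sub_apply, smul_sub]
  exact integral_sub (hint h₁ v) (hint h₂ v)

theorem exists_norm_hankelTransform_le (hl : -1 < l) (h : 𝓢(ℝ, E)) :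
    ∃ C : ℝ, ∀ v, ‖hankelTransform l h v‖ ≤ C * (1 + v ^ 2) := by
  obtain ⟨C, hC⟩ := exists_abs_nbessel_le hl
  have hC0 : 0 ≤ C := by simpa using (abs_nonneg _).trans (hC 0)
  have hint := ((integrableOn_rpow_mul_norm (show -1 < 2 * l + 1 by linarith) h).add
    (integrableOn_rpow_mul_norm (show -1 < 2 * l + 1 + 2 by linarith) h)).const_mul C
  refine ⟨∫ t in Set.Ioi (0 : ℝ),
    C * (t ^ (2 * l + 1) * ‖h t‖ + t ^ (2 * l + 1 + 2) * ‖h t‖), fun v => ?_⟩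
  rw [← integral_mul_const]
  refine norm_integral_le_of_norm_le (hint.mul_const _) ?_
  filter_upwards [ae_restrict_mem measurableSet_Ioi] with t ht
  rw [Set.mem_Ioi] at ht
  calc ‖(nbessel l (v * t) * t ^ (2 * l + 1)) • h t‖
      = |nbessel l (v * t)| * (t ^ (2 * l + 1) * ‖h t‖) := by
        rw [norm_smul, norm_mul, Real.norm_eq_abs, Real.norm_of_nonneg (by positivity), mul_assoc]
    _ ≤ C * ((1 + t ^ 2) * (1 + v ^ 2)) * (t ^ (2 * l + 1) * ‖h t‖) := by
        gcongr
        refine (hC _).trans ?_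
        gcongr
        nlinarith [sq_nonneg t, sq_nonneg v]
    _ = C * (t ^ (2 * l + 1) * ‖h t‖ + t ^ (2 * l + 1 + 2) * ‖h t‖) * (1 + v ^ 2) := by
        rw [Real.rpow_add ht (2 * l + 1) 2, Real.rpow_two]
        ring

theorem hasDerivAt_nbessel_mul_right (hl : -1 < l) (v t : ℝ) :
    HasDerivAt (fun v => nbessel l (v * t)) (-(v * t ^ 2 / (2 * l + 2) * nbessel (l + 1) (v * t)))
      v := by
  refine ((hasDerivAt_nbessel hl (v * t)).comp v ((hasDerivAt_id' v).mul_const t)).congr_deriv ?_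
  ring

theorem hasDerivAt_hankelTransform (hl : -1 < l) (h : 𝓢(ℝ, E)) (v : ℝ) :
    HasDerivAt (hankelTransform l h) (-(v / (2 * l + 2)) • hankelTransform (l + 1) h v) v := by
  have hl1 : -1 < l + 1 := by linarith
  have hc : 0 < 2 * l + 2 := by linarith
  have hint (v : ℝ) := integrableOn_nbessel_mul_smul hl (show -1 < 2 * l + 1 by linarith) h v
  have hint' := integrableOn_nbessel_mul_smul hl1 (show -1 < 2 * (l + 1) + 1 by linarith) h v
  rw [hankelTransform, ← integral_smul]
  refine (hasDerivAt_integral_of_dominated_loc_of_deriv_le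
    (F := fun v t => (nbessel l (v * t) * t ^ (2 * l + 1)) • h t)
    (F' := fun v t =>
      -(v / (2 * l + 2)) • (nbessel (l + 1) (v * t) * t ^ (2 * (l + 1) + 1)) • h t)
    (bound := fun t => (|v| + 1) / (2 * l + 2) * (t ^ (2 * (l + 1) + 1) * ‖h t‖))
    (Metric.ball_mem_nhds v one_pos) (.of_forall fun v => (hint v).aestronglyMeasurable) (hint v)
    (hint'.aestronglyMeasurable.const_smul _) ?_
    ((integrableOn_rpow_mul_norm (by linarith) h).const_mul _) ?_).2
  · filter_upwards [ae_restrict_mem measurableSet_Ioi] with t ht x hx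
    rw [Set.mem_Ioi] at ht
    have hx' : |x| ≤ |v| + 1 := by
      rw [Metric.mem_ball, Real.dist_eq] at hx
      linarith [abs_sub_abs_le_abs_sub x v]
    have hj := abs_nbessel_le_one (show -(1 / 2) ≤ l + 1 by linarith) (x * t)
    rw [norm_smul, norm_smul, norm_mul, norm_neg, norm_div, Real.norm_of_nonneg hc.le,
      Real.norm_eq_abs, Real.norm_eq_abs, Real.norm_of_nonneg (by positivity)]
    gcongr
    exact mul_le_of_le_one_left (by positivity) hj
  · filter_upwards [ae_restrict_mem measurableSet_Ioi] with t ht x _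
    rw [Set.mem_Ioi] at ht
    refine (((hasDerivAt_nbessel_mul_right hl x t).mul_const _).smul_const (h t)).congr_deriv ?_
    rw [show 2 * (l + 1) + 1 = 2 * l + 1 + 2 by ring, Real.rpow_add ht (2 * l + 1) 2,
      Real.rpow_two]
    module

theorem hasDerivAt_bessel_wronskian (hl : -1 < l) (v : ℝ) {g h : ℝ → E} {g' : E} {t : ℝ}
    (ht : 0 < t) (hh : HasDerivAt h (t • g t) t) (hg : HasDerivAt g g' t) :
    HasDerivAt
      (fun t => (nbessel l (v * t) * t ^ (2 * l + 2)) • g t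
        + (v ^ 2 / (2 * l + 2)) • (nbessel (l + 1) (v * t) * t ^ (2 * l + 2)) • h t)
      ((nbessel l (v * t) * t ^ (2 * l + 1)) • ((2 * l + 2) • g t + t • g')
        + v ^ 2 • (nbessel l (v * t) * t ^ (2 * l + 1)) • h t) t := by
  have hl1 : -1 < l + 1 := by linarith
  have hc : 2 * l + 2 ≠ 0 := by linarith
  have hpow := Real.hasDerivAt_rpow_const (p := 2 * l + 2) (.inl ht.ne')
  have hj := hasDerivAt_nbessel_mul_right hl t v
  have hj1 := hasDerivAt_nbessel_mul_right hl1 t v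
  have hrec := nbessel_recurrence hl (v * t)
  have hmul : t ^ (2 * l + 2) = t * t ^ (2 * l + 1) := by
    rw [show 2 * l + 2 = 1 + (2 * l + 1) by ring, Real.rpow_add ht, Real.rpow_one]
  simp only [mul_comm _ v] at hj hj1
  refine (((hj.fun_mul hpow).fun_smul hg).fun_add
    (((hj1.fun_mul hpow).fun_smul hh).fun_const_smul (v ^ 2 / (2 * l + 2)))).congr_deriv ?_
  rw [show 2 * l + 2 - 1 = 2 * l + 1 by ring, hmul, show l + 1 + 1 = l + 2 by ring,
    show 2 * (l + 1) + 2 = 2 * l + 4 by ring]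
  generalize t ^ (2 * l + 1) = w
  match_scalars
  · ring
  · ring
  · linear_combination (v ^ 2 / (2 * l + 2) * w) * hrec
      + (nbessel l (v * t) * w) * div_mul_cancel₀ (v ^ 2) hc

variable [CompleteSpace E]

-- Green's identity for the Bessel operator `h'' + (2 l + 1) / t • h'`, whose boundary term
-- `W = t ^ (2 l + 1) (j h' - (∂ₜ j) h)` vanishes at `0` and at infinity.
theorem sq_smul_hankelTransform (hl : -1 < l) {h g D : 𝓢(ℝ, E)}
    (hg : ∀ t : ℝ, t • g t = deriv h t) (hD : ∀ t, D t = (2 * l + 2) • g t + t • deriv g t)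
    (v : ℝ) : v ^ 2 • hankelTransform l h v = -hankelTransform l D v := by
  have hc : -1 < 2 * l + 2 := by linarith
  have hint (h : 𝓢(ℝ, E)) := integrableOn_nbessel_mul_smul hl (show -1 < 2 * l + 1 by linarith) h v
  set W : ℝ → E := fun t => (nbessel l (v * t) * t ^ (2 * l + 2)) • g t
    + (v ^ 2 / (2 * l + 2)) • (nbessel (l + 1) (v * t) * t ^ (2 * l + 2)) • h t with hW
  have hWint : IntegrableOn W (Set.Ioi 0) := (integrableOn_nbessel_mul_smul hl hc g v).add
    ((integrableOn_nbessel_mul_smul (by linarith) hc h v).smul _)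
  have hcont {m : ℝ} (hm : -1 < m) (h : 𝓢(ℝ, E)) :
      Continuous fun t => (nbessel m (v * t) * t ^ (2 * l + 2)) • h t :=
    (((continuous_nbessel hm).comp (by fun_prop)).mul
      (Real.continuous_rpow_const (by linarith))).smul h.continuous
  have hWcont : Continuous W := (hcont hl g).add ((hcont (by linarith) h).const_smul _)
  have hderiv (t : ℝ) (ht : t ∈ Set.Ioi 0) : HasDerivAt W
      ((nbessel l (v * t) * t ^ (2 * l + 1)) • D t
        + v ^ 2 • (nbessel l (v * t) * t ^ (2 * l + 1)) • h t) t := by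
    rw [hD]
    exact hasDerivAt_bessel_wronskian hl v ht (hg t ▸ h.differentiableAt.hasDerivAt)
      g.differentiableAt.hasDerivAt
  have hderivint := (hint D).add ((hint h).smul (v ^ 2))
  have hlim := tendsto_zero_of_hasDerivAt_of_integrableOn_Ioi hderiv hderivint hWint
  have hFTC := integral_Ioi_of_hasDerivAt_of_tendsto hWcont.continuousWithinAt hderiv hderivint hlim
  have hW0 : W 0 = 0 := by
    simp only [hW, Real.zero_rpow (show 2 * l + 2 ≠ 0 by linarith), mul_zero, zero_smul, smul_zero,
      add_zero]
  have hsum : ∫ t in Set.Ioi (0 : ℝ), ((nbessel l (v * t) * t ^ (2 * l + 1)) • D t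
      + v ^ 2 • (nbessel l (v * t) * t ^ (2 * l + 1)) • h t)
      = hankelTransform l D v + v ^ 2 • hankelTransform l h v := by
    rw [hankelTransform, hankelTransform, ← integral_smul]
    exact integral_add (hint D) ((hint h).smul (v ^ 2))
  rw [hsum, hW0, sub_zero] at hFTC
  exact eq_neg_of_add_eq_zero_right hFTC

theorem exists_even_sq_smul_hankelTransform (hl : -1 < l) {h : 𝓢(ℝ, E)} (hh : Function.Even h) :
    ∃ D : 𝓢(ℝ, E), Function.Even D ∧
      ∀ v : ℝ, v ^ 2 • hankelTransform l h v = -hankelTransform l D v := by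
  obtain ⟨g, hgeven, hg⟩ := exists_even_schwartzMap_smul_eq_deriv hh
  let D := (2 * l + 2) • g + smulLeftCLM E (fun t : ℝ => t) (derivCLM ℝ E g)
  have hD (t : ℝ) : D t = (2 * l + 2) • g t + t • deriv g t := by
    rw [add_apply, smul_apply, smulLeftCLM_apply_apply (by fun_prop), derivCLM_apply]
  refine ⟨D, fun t => ?_, sq_smul_hankelTransform hl hg hD⟩
  rw [hD, hD, hgeven, odd_deriv_of_even hgeven, neg_smul_neg]

theorem exists_even_one_add_sq_pow_smul_hankelTransform (hl : -1 < l) {h : 𝓢(ℝ, E)}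
    (hh : Function.Even h) (k : ℕ) :
    ∃ D : 𝓢(ℝ, E), Function.Even D ∧
      ∀ v : ℝ, (1 + v ^ 2) ^ k • hankelTransform l h v = hankelTransform l D v := by
  induction k with
  | zero => exact ⟨h, hh, fun v => by rw [pow_zero, one_smul]⟩
  | succ k ih =>
    obtain ⟨D, hD, hpow⟩ := ih
    obtain ⟨D', hD', hsq⟩ := exists_even_sq_smul_hankelTransform hl hD
    refine ⟨D - D', fun t => by rw [sub_apply, sub_apply, hD, hD'], fun v => ?_⟩
    rw [hankelTransform_sub hl, pow_succ', mul_smul, hpow, add_smul, one_smul, hsq,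
      sub_eq_add_neg]

theorem exists_pow_mul_norm_hankelTransform_le (hl : -1 < l) {h : 𝓢(ℝ, E)}
    (hh : Function.Even h) (k : ℕ) :
    ∃ C : ℝ, ∀ v, |v| ^ k * ‖hankelTransform l h v‖ ≤ C := by
  obtain ⟨D, -, hD⟩ := exists_even_one_add_sq_pow_smul_hankelTransform hl hh (k + 1)
  obtain ⟨C, hC⟩ := exists_norm_hankelTransform_le hl D
  refine ⟨C, fun v => ?_⟩
  have hpos : 0 < 1 + v ^ 2 := by positivity
  have habs : |v| ≤ 1 + v ^ 2 := by rw [← sq_abs]; nlinarith [sq_nonneg (|v| - 1)]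
  refine le_of_mul_le_mul_right ?_ hpos
  calc |v| ^ k * ‖hankelTransform l h v‖ * (1 + v ^ 2)
      ≤ (1 + v ^ 2) ^ k * ‖hankelTransform l h v‖ * (1 + v ^ 2) := by gcongr
    _ = ‖hankelTransform l D v‖ := by
        rw [← hD, norm_smul, Real.norm_of_nonneg (by positivity)]
        ring
    _ ≤ C * (1 + v ^ 2) := hC v

theorem exists_even_schwartzMap_eq_hankelTransform (hl : -1 < l) {h : 𝓢(ℝ, E)}
    (hh : Function.Even h) :
    ∃ F : 𝓢(ℝ, E), Function.Even F ∧ ∀ v, F v = hankelTransform l h v := by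
  suffices hex : ∃ F : 𝓢(ℝ, E), ⇑F = hankelTransform l h by
    obtain ⟨F, hF⟩ := hex
    exact ⟨F, hF ▸ even_hankelTransform l h, congrFun hF⟩
  refine exists_schwartzMap_of_hasDerivAt_mem_span
    (B := {F | ∃ (m : ℕ) (l : ℝ), -1 < l ∧ F = fun v : ℝ => v ^ m • hankelTransform l h v})
    ?_ ?_ ⟨0, l, hl, by simp only [pow_zero, one_smul]⟩
  · rintro _ ⟨m, l, hl, rfl⟩
    refine ⟨_, Submodule.add_mem _
      (Submodule.smul_mem _ (m : ℝ) (Submodule.subset_span ⟨m - 1, l, hl, rfl⟩))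
      (Submodule.smul_mem _ (-(1 / (2 * l + 2))) (Submodule.subset_span
        ⟨m + 1, l + 1, by linarith, rfl⟩)), fun v => ?_⟩
    refine ((hasDerivAt_pow m v).smul (hasDerivAt_hankelTransform hl h v)).congr_deriv ?_
    simp only [Pi.add_apply, Pi.smul_apply]
    module
  · rintro _ ⟨m, l, hl, rfl⟩ k
    obtain ⟨C, hC⟩ := exists_pow_mul_norm_hankelTransform_le hl hh (k + m)
    refine ⟨C, fun v => (hC v).trans_eq' ?_⟩
    rw [norm_smul, norm_pow, Real.norm_eq_abs, pow_add, mul_assoc]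

end HankelTransform

section RadialHankelTransform

variable {E : Type*} [NormedAddCommGroup E] [NormedSpace ℝ E]

/-- The Hankel transform of order `m` in the variable `x ^ (a / 2)`, with `nbessel m` scaled and the
power of `x` chosen as in the `(κ, a)`-generalized Fourier transform. -/
noncomputable def radialHankelTransform (a m : ℝ) (h : ℝ → E) (w : ℝ) : E :=
  ∫ x in Set.Ioi (0 : ℝ),
    (nbessel m (2 / a * w * x ^ (a / 2)) * x ^ (a * (m + 1) - 1)) • h x

theorem radialHankelTransform_eq_smul_hankelTransform {a : ℝ} (ha : 0 < a) (m : ℝ) (h : ℝ → E)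
    (w : ℝ) : radialHankelTransform a m h w
      = (2 / a) • hankelTransform m (fun t => h (t ^ (2 / a))) (2 / a * w) := by
  have hpos : 0 < 2 / a := by positivity
  rw [radialHankelTransform, hankelTransform, ← integral_smul,
    ← integral_comp_rpow_Ioi _ hpos.ne']
  refine setIntegral_congr_fun measurableSet_Ioi fun t ht => ?_
  rw [Set.mem_Ioi] at ht
  have harg : (t ^ (2 / a)) ^ (a / 2) = t := by
    rw [← Real.rpow_mul ht.le, div_mul_div_cancel₀ ha.ne', div_self two_ne_zero, Real.rpow_one]
  have hpow : t ^ (2 * m + 1) = t ^ (2 / a - 1) * (t ^ (2 / a)) ^ (a * (m + 1) - 1) := by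
    rw [← Real.rpow_mul ht.le, ← Real.rpow_add ht]
    congr 1
    field_simp
    ring
  simp only [harg, hpow, abs_of_pos hpos]
  module

theorem exists_even_schwartzMap_eq_radialHankelTransform [CompleteSpace E] {a m : ℝ} (ha : 0 < a)
    (haN : ∃ R : ℕ, (R : ℝ) = 2 / a) (hm : -1 < m) {h : 𝓢(ℝ, E)} (hh : Function.Even h) :
    ∃ F : 𝓢(ℝ, E), Function.Even F ∧ ∀ w, F w = radialHankelTransform a m h w := by
  obtain ⟨R, hR⟩ := haN
  have hpos : 0 < 2 / a := by positivity
  have hR0 : R ≠ 0 := by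
    rintro rfl
    exact hpos.ne (by rw [← hR, Nat.cast_zero])
  obtain ⟨h', hh'⟩ := exists_schwartzMap_comp_pow h hR0
  obtain ⟨F, hFeven, hF⟩ := exists_even_schwartzMap_eq_hankelTransform hm
    (h := h') (funext hh' ▸ even_comp_pow hh R)
  let scale := ContinuousLinearEquiv.unitsEquivAut ℝ (Units.mk0 (2 / a) hpos.ne')
  have hscale (w : ℝ) : compCLMOfContinuousLinearEquiv ℝ scale F w = F (2 / a * w) :=
    congrArg F (mul_comm _ _)
  refine ⟨(2 / a) • compCLMOfContinuousLinearEquiv ℝ scale F, fun w => ?_, fun w => ?_⟩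
  · rw [smul_apply, smul_apply, hscale, hscale, mul_neg, hFeven]
  · rw [smul_apply, hscale, hF, radialHankelTransform_eq_smul_hankelTransform ha, funext hh', ← hR]
    simp only [Real.rpow_natCast]

end RadialHankelTransform

section GeneralizedFourier

theorem integral_eq_integral_Ioi_add_comp_neg {E : Type*} [NormedAddCommGroup E]
    [NormedSpace ℝ E] {G : ℝ → E} (hG : IntegrableOn G (Set.Ioi 0))
    (hGneg : IntegrableOn (fun x => G (-x)) (Set.Ioi 0)) :
    ∫ x, G x = ∫ x in Set.Ioi 0, (G x + G (-x)) := by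
  have hIio : IntegrableOn G (Set.Iio 0) := by
    rw [← (Measure.measurePreserving_neg (volume : Measure ℝ)).integrableOn_comp_preimage
      (Homeomorph.neg ℝ).measurableEmbedding]
    simpa only [Function.comp_def, Set.neg_preimage, Set.neg_Iio, neg_zero] using hGneg
  rw [integral_add hG hGneg, integral_comp_neg_Ioi, neg_zero, add_comm,
    intervalIntegral.integral_Iic_add_Ioi ((integrableOn_Iic_iff_integrableOn_Iio).2 hIio) hG]

variable {κ a : ℝ}

/-- The coefficient of the odd part `x * j_{λ + 2 / a}` of the kernel `bker κ a`. -/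
noncomputable def bkerCoeff (κ a : ℝ) : ℂ :=
  Complex.exp (-(Real.pi / a) * Complex.I) * ((a ^ (-(2 / a)) : ℝ) : ℂ)
    * ((Real.Gamma ((2 * κ - 1) / a + 1) / Real.Gamma ((2 * κ - 1) / a + 1 + 2 / a) : ℝ) : ℂ)

theorem bker_mul_mul_abs_rpow {x : ℝ} (hx : 0 < x) (y s : ℝ) (z : ℂ) :
    bker κ a (x * y) * z * ((|x| ^ s : ℝ) : ℂ) =
      (nbessel ((2 * κ - 1) / a) (2 / a * |y| ^ (a / 2) * x ^ (a / 2)) * x ^ s) • z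
      + bkerCoeff κ a * y *
        (nbessel ((2 * κ - 1) / a + 2 / a) (2 / a * |y| ^ (a / 2) * x ^ (a / 2))
          * x ^ (s + 1)) • z := by
  have harg : 2 / a * |x * y| ^ (a / 2) = 2 / a * |y| ^ (a / 2) * x ^ (a / 2) := by
    rw [abs_mul, abs_of_pos hx, Real.mul_rpow hx.le (abs_nonneg y)]
    ring
  rw [bker, ← bkerCoeff, harg, abs_of_pos hx, Real.rpow_add_one hx.ne']
  simp only [Complex.real_smul]
  push_cast
  ring

theorem integrableOn_bker_mul (ha : 0 < a) (hl : -1 < (2 * κ - 1) / a) {s : ℝ} (hs : -1 < s)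
    (f : 𝓢(ℝ, ℂ)) (y : ℝ) :
    IntegrableOn (fun x => bker κ a (x * y) * f x * ((|x| ^ s : ℝ) : ℂ)) (Set.Ioi 0) := by
  have ha2 : 0 < 2 / a := by positivity
  have hp : 0 ≤ a / 2 := by positivity
  rw [integrableOn_congr_fun (fun x (hx : x ∈ Set.Ioi 0) => bker_mul_mul_abs_rpow hx y s (f x))
    measurableSet_Ioi]
  exact (integrableOn_nbessel_mul_rpow_smul hl hs hp f _).add
    ((integrableOn_nbessel_mul_rpow_smul (by linarith) (by linarith) hp f _).const_mul _)

theorem integral_bker_mul (ha : 0 < a) (hl : -1 < (2 * κ - 1) / a) {f p q : 𝓢(ℝ, ℂ)}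
    (hp : Function.Even p) (hq : Function.Even q) (hf : ∀ t : ℝ, f t = p t + t • q t) (y : ℝ) :
    ∫ x : ℝ, bker κ a (x * y) * f x * ((|x| ^ (2 * κ + a - 2) : ℝ) : ℂ) =
      2 * radialHankelTransform a ((2 * κ - 1) / a) p (|y| ^ (a / 2))
      + 2 * bkerCoeff κ a * y *
        radialHankelTransform a ((2 * κ - 1) / a + 2 / a) q (|y| ^ (a / 2)) := by
  have ha2 : 0 < 2 / a := by positivity
  have hs : 2 * κ + a - 2 = a * ((2 * κ - 1) / a + 1) - 1 := by field_simp; ring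
  have hs2 : 2 * κ + a - 2 + 1 + 1 = a * ((2 * κ - 1) / a + 2 / a + 1) - 1 := by field_simp; ring
  have hs_gt {m : ℝ} (hm : -1 < m) : -1 < a * (m + 1) - 1 := by
    linarith [mul_pos ha (show 0 < m + 1 by linarith)]
  have hneg (x : ℝ) : f (-x) = p x - x • q x := by rw [hf, hp, hq, neg_smul, sub_eq_add_neg]
  have hint (f : 𝓢(ℝ, ℂ)) := integrableOn_bker_mul ha hl (hs ▸ hs_gt hl) f
  have hGneg : IntegrableOn (fun x : ℝ =>
      bker κ a (-x * y) * f (-x) * ((|-x| ^ (2 * κ + a - 2) : ℝ) : ℂ)) (Set.Ioi 0) := by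
    simp only [neg_mul_comm, abs_neg]
    exact hint (compCLMOfContinuousLinearEquiv ℝ (ContinuousLinearEquiv.neg ℝ) f) (-y)
  have hl2 : -1 < (2 * κ - 1) / a + 2 / a := by linarith
  have hradial {m : ℝ} (hm : -1 < m) (h : 𝓢(ℝ, ℂ)) := integrableOn_nbessel_mul_rpow_smul hm
    (hs_gt hm) (show 0 ≤ a / 2 by positivity) h (2 / a * |y| ^ (a / 2))
  rw [integral_eq_integral_Ioi_add_comp_neg (hint f y) hGneg, radialHankelTransform,
    radialHankelTransform, ← integral_const_mul, ← integral_const_mul,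
    ← integral_add ((hradial hl p).const_mul _) ((hradial hl2 q).const_mul _)]
  refine setIntegral_congr_fun measurableSet_Ioi fun x hx => ?_
  rw [Set.mem_Ioi] at hx
  simp only [neg_mul_comm, abs_neg, bker_mul_mul_abs_rpow hx, hneg]
  rw [hf, ← hs, ← hs2, Real.rpow_add_one hx.ne' (_ + 1)]
  simp only [Complex.real_smul]
  push_cast
  ring

end GeneralizedFourier

theorem stmt14_general (a κ : ℝ) (ha : 0 < a) (haN : ∃ R : ℕ, (R : ℝ) = 2 / a)
    (hl : -1 < (2 * κ - 1) / a) (f : SchwartzMap ℝ ℂ) :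
    ∃ F₁ F₂ : SchwartzMap ℝ ℂ,
      (∀ v : ℝ, F₁ (-v) = F₁ v) ∧ (∀ v : ℝ, F₂ (-v) = F₂ v) ∧
      ∀ y : ℝ, genFourier κ a f y = F₁ (|y| ^ (a / 2)) + (y : ℂ) * F₂ (|y| ^ (a / 2)) := by
  have ha2 : 0 < 2 / a := by positivity
  obtain ⟨p, q, hp, hq, hf⟩ := exists_even_schwartzMap_eq_add_smul f
  obtain ⟨H₁, hH₁even, hH₁⟩ := exists_even_schwartzMap_eq_radialHankelTransform ha haN hl hp
  obtain ⟨H₂, hH₂even, hH₂⟩ := exists_even_schwartzMap_eq_radialHankelTransform ha haN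
    (show -1 < (2 * κ - 1) / a + 2 / a by linarith) hq
  set c : ℂ := ((1 / (2 * a ^ ((2 * κ - 1) / a) * Real.Gamma ((2 * κ - 1) / a + 1)) : ℝ) : ℂ)
    with hc
  refine ⟨(2 * c) • H₁, (2 * c * bkerCoeff κ a) • H₂, fun v => ?_, fun v => ?_, fun y => ?_⟩
  · rw [smul_apply, smul_apply, hH₁even]
  · rw [smul_apply, smul_apply, hH₂even]
  · rw [genFourier, integral_bker_mul ha hl hp hq hf, smul_apply, smul_apply, hH₁, hH₂, ← hc,
      smul_eq_mul, smul_eq_mul]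
    ring

/-- for 2/a ∈ ℕ and lambda = (2κ-1)/a ≥ -1/2, the generalized Fourier
transform of a Schwartz function f has the form F₁(|y|^{a/2}) + y F₂(|y|^{a/2})
with even Schwartz functions F₁, F₂. -/
theorem stmt14 (a κ : ℝ) (ha : 0 < a) (haN : ∃ R : ℕ, (R : ℝ) = 2 / a)
    (hκ : 0 ≤ κ) (hl : -(1 / 2 : ℝ) ≤ (2 * κ - 1) / a) (f : SchwartzMap ℝ ℂ) :
    ∃ F₁ F₂ : SchwartzMap ℝ ℂ,
      (∀ v : ℝ, F₁ (-v) = F₁ v) ∧ (∀ v : ℝ, F₂ (-v) = F₂ v) ∧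
      ∀ y : ℝ, genFourier κ a f y = F₁ (|y| ^ (a / 2)) + (y : ℂ) * F₂ (|y| ^ (a / 2)) :=
  stmt14_general a κ ha haN (by linarith) f
end
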